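/- Every positive semi-definite quartic form in ℝ[x,y,z] is a sum of squares of quadratic forms. -/

import Mathlib

open MvPolynomial

open Module Metric Filter Topology

/-! Subtracting squares of quadratic forms from a nonnegative quartic `F` for as long as it stays
nonnegative must end at `0`, provided that every nonzero nonnegative ternary quartic dominates the
square of a nonzero quadratic form: by compactness there is a maximal sum of squares below `F`, and
by maximality the remainder dominates no further square.

For the domination, as in Choi and Lam's proof of Hilbert's theorem: if `F` has no nontrivial zero
then it dominates a small multiple of the fourth power of any linear form. Otherwise move a zero to
`(1, 0, 0)`. Then `F = x² f + 2 x g + h` with `f`, `g`, `h` binary forms of degrees `2`, `3`, `4`,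
where `f` and `f h - g²` are nonnegative. If `f = 0`, then `g = 0` and `F = h` is a binary form. If
`f = c ℓ²` with `c > 0`, then `g = ℓ b` and `c F ≥ (c x ℓ + b)²`. If `f` is positive, use
`f F = (x f + g)² + (f h - g²)`: either `f h - g²` dominates a multiple of `f k²` for a quadratic
form `k`, and then `F` dominates a multiple of `k²`; or `ℓ² m²` divides `f h - g²`. In the
latter case a shear `x ↦ x + a` makes `g` a multiple of `ℓ m` and `h` a multiple of `(ℓ m)²`, after
which the square can be written down. -/

/-- The forms of degree `n` on `E`, i.e. the functions `E → R` given by homogeneous polynomials of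
degree `n`, encoded coordinate-free: a form is a linear combination of `n`-fold products of linear
functionals. -/
def forms (R E : Type*) [CommSemiring R] [AddCommMonoid E] [Module R E] (n : ℕ) :
    Submodule R (E → R) :=
  LinearMap.range (LinearMap.ltoFun R E R R) ^ n

namespace forms

section CommSemiring

variable {R E E' σ : Type*} [CommSemiring R] [AddCommMonoid E] [Module R E]
  [AddCommMonoid E'] [Module R E'] {m n : ℕ} {F G : E → R}

theorem mem_zero : F ∈ forms R E 0 ↔ ∃ c, F = Function.const E c := by
  simp only [forms, pow_zero, Submodule.mem_one, eq_comm (a := F)]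
  rfl

theorem mem_one : F ∈ forms R E 1 ↔ ∃ ℓ : Dual R E, F = ℓ := by
  simp only [forms, pow_one, LinearMap.mem_range, LinearMap.ltoFun_apply, eq_comm (a := F)]

theorem dual_mem (ℓ : Dual R E) : ⇑ℓ ∈ forms R E 1 :=
  mem_one.2 ⟨ℓ, rfl⟩

theorem const_mem (c : R) : Function.const E c ∈ forms R E 0 :=
  mem_zero.2 ⟨c, rfl⟩

theorem mul_mem (hF : F ∈ forms R E m) (hG : G ∈ forms R E n) : F * G ∈ forms R E (m + n) := by
  rw [forms, pow_add]
  exact Submodule.mul_mem_mul hF hG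

theorem pow_mem (hF : F ∈ forms R E m) (k : ℕ) : F ^ k ∈ forms R E (m * k) := by
  rw [forms, pow_mul]
  exact Submodule.pow_mem_pow _ hF k

theorem induction {P : ℕ → (E → R) → Prop} (const : ∀ c, P 0 (Function.const E c))
    (add : ∀ n, ∀ F ∈ forms R E n, ∀ G ∈ forms R E n, P n F → P n G → P n (F + G))
    (dual_mul : ∀ n (ℓ : Dual R E), ∀ F ∈ forms R E n, P n F → P (n + 1) (ℓ * F))
    (hF : F ∈ forms R E n) : P n F := by
  refine Submodule.pow_induction_on_left' _ (C := fun n F _ => P n F) const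
    (fun F G n hF hG => add n F hF G hG) ?_ hF
  rintro _ ⟨ℓ, rfl⟩ n F hF ih
  exact dual_mul n ℓ F hF ih

theorem comp_mem (hF : F ∈ forms R E n) (T : E' →ₗ[R] E) : F ∘ T ∈ forms R E' n := by
  refine forms.induction (P := fun n F => F ∘ T ∈ forms R E' n) const_mem
    (fun n F _ G _ => add_mem) (fun n ℓ F _ ih => ?_) hF
  rw [add_comm]
  exact mul_mem (dual_mem (ℓ ∘ₗ T)) ih

theorem map_smul (hF : F ∈ forms R E n) (t : R) (v : E) : F (t • v) = t ^ n * F v := by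
  refine forms.induction (P := fun n F => F (t • v) = t ^ n * F v) (fun c => by simp)
    (fun n F _ G _ ihF ihG => by simp [ihF, ihG, mul_add])
    (fun n ℓ F _ ih => ?_) hF
  simp only [Pi.mul_apply, ih, _root_.map_smul, smul_eq_mul]
  ring

theorem map_zero (hF : F ∈ forms R E (n + 1)) : F 0 = 0 := by
  simpa using map_smul hF 0 0

theorem map_homogeneousSubmodule [Finite σ] (n : ℕ) :
    (homogeneousSubmodule σ R n).map (aeval fun i (v : σ → R) => v i).toLinearMap =
      forms R (σ → R) n := by
  cases nonempty_fintype σ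
  classical
  rw [← homogeneousSubmodule_one_pow, Submodule.map_pow, forms,
    homogeneousSubmodule_one_eq_span_X, Submodule.map_span, ← Set.range_comp]
  congr 1
  apply le_antisymm
  · rw [Submodule.span_le]
    rintro _ ⟨i, rfl⟩
    exact ⟨LinearMap.proj i, by ext; simp⟩
  · rintro _ ⟨ℓ, rfl⟩
    have hℓ : ⇑ℓ = ∑ i, ℓ (Pi.single i 1) • fun v : σ → R => v i := by
      ext v
      conv_lhs => rw [pi_eq_sum_univ' v]
      simp [mul_comm]
    rw [LinearMap.ltoFun_apply, hℓ]
    exact Submodule.sum_mem _ fun i _ => Submodule.smul_mem _ _ <|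
      Submodule.subset_span ⟨i, by simp⟩

theorem mem_iff_exists_isHomogeneous [Finite σ] {F : (σ → R) → R} :
    F ∈ forms R (σ → R) n ↔ ∃ p : MvPolynomial σ R, p.IsHomogeneous n ∧ ∀ v, F v = eval v p := by
  have heval : ∀ (p : MvPolynomial σ R) (v : σ → R),
      aeval (fun i (v : σ → R) => v i) p v = eval v p := fun p v => by
    simpa [aeval_eq_eval] using
      comp_aeval_apply (fun i (v : σ → R) => v i) (Pi.evalAlgHom R (fun _ : σ → R => R) v) p
  simp [← map_homogeneousSubmodule, Submodule.mem_map, _root_.funext_iff, heval,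
    eq_comm (a := F _)]

end CommSemiring

section CommRing

variable {R E U : Type*} [CommRing R] [AddCommGroup E] [Module R E] [AddCommGroup U] [Module R U]
  {n : ℕ} {F : E → R}

theorem exists_eq_dual_mul_add_projection (hF : F ∈ forms R E (n + 1)) (ℓ : Dual R E) (v : E) :
    ∃ G ∈ forms R E n, ∀ w, F w = ℓ w * G w + F (w - ℓ w • v) := by
  induction n generalizing F with
  | zero =>
    obtain ⟨φ, rfl⟩ := mem_one.1 hF
    exact ⟨Function.const E (φ v), const_mem _, fun w => by simp⟩
  | succ n ih =>
    rw [forms, pow_succ'] at hF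
    induction hF using Submodule.mul_induction_on' with
    | mem_mul_mem φ hφ F hF =>
      obtain ⟨φ, rfl⟩ := hφ
      obtain ⟨G, hG, hFG⟩ := ih hF
      let π : E →ₗ[R] E := LinearMap.id - ℓ.smulRight v
      refine ⟨φ v • F + (φ ∘ₗ π) * G, add_mem (Submodule.smul_mem _ _ hF) ?_, fun w => ?_⟩
      · rw [add_comm]
        exact mul_mem (dual_mem _) hG
      · simp [π, hFG w]
        ring
    | add F _ F' _ h h' =>
      obtain ⟨G, hG, hFG⟩ := h
      obtain ⟨G', hG', hFG'⟩ := h'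
      refine ⟨G + G', add_mem hG hG', fun w => ?_⟩
      simp only [Pi.add_apply, hFG w, hFG' w]
      ring

theorem exists_eq_fst_mul_add {F : R × U → R} (hF : F ∈ forms R (R × U) (n + 1)) :
    ∃ G ∈ forms R (R × U) n, ∀ x u, F (x, u) = x * G (x, u) + F (0, u) := by
  obtain ⟨G, hG, hFG⟩ := exists_eq_dual_mul_add_projection hF (LinearMap.fst R R U) (1, 0)
  exact ⟨G, hG, fun x u => by simpa using hFG (x, u)⟩

theorem restrict_mem {F : R × U → R} (hF : F ∈ forms R (R × U) n) :
    (fun u => F (0, u)) ∈ forms R U n :=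
  comp_mem hF (LinearMap.inr R R U)

theorem fst_mul_add_mem {f g : U → R} (hf : f ∈ forms R U n) (hg : g ∈ forms R U (n + 1)) :
    (fun p : R × U => p.1 * f p.2 + g p.2) ∈ forms R (R × U) (n + 1) := by
  refine add_mem ?_ (comp_mem hg (LinearMap.snd R R U))
  rw [add_comm]
  exact mul_mem (dual_mem (LinearMap.fst R R U))
    (comp_mem hf (LinearMap.snd R R U))

theorem exists_eq_quartic_in_fst {F : R × U → R} (hF : F ∈ forms R (R × U) 4) :
    ∃ (c : R) (ℓ : Dual R U), ∃ f ∈ forms R U 2, ∃ g ∈ forms R U 3, ∃ h ∈ forms R U 4,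
      ∀ x u, F (x, u) = c * x ^ 4 + ℓ u * x ^ 3 + f u * x ^ 2 + g u * x + h u := by
  obtain ⟨F₃, hF₃, hFF₃⟩ := exists_eq_fst_mul_add hF
  obtain ⟨F₂, hF₂, hF₃F₂⟩ := exists_eq_fst_mul_add hF₃
  obtain ⟨F₁, hF₁, hF₂F₁⟩ := exists_eq_fst_mul_add hF₂
  obtain ⟨F₀, hF₀, hF₁F₀⟩ := exists_eq_fst_mul_add hF₁
  obtain ⟨c, rfl⟩ := mem_zero.1 hF₀
  obtain ⟨ℓ, hℓ⟩ := mem_one.1 (restrict_mem hF₁)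
  refine ⟨c, ℓ, _, restrict_mem hF₂, _, restrict_mem hF₃, _,
    restrict_mem hF, fun x u => ?_⟩
  rw [hFF₃, hF₃F₂, hF₂F₁, hF₁F₀, ← congrFun hℓ u, Function.const_apply]
  ring

end CommRing

section Field

variable {K E : Type*} [Field K] [AddCommGroup E] [Module K E] {n : ℕ}

instance [FiniteDimensional K E] (n : ℕ) : FiniteDimensional K (forms K E n) :=
  Module.Finite.iff_fg.2 <| Submodule.FG.pow (Module.Finite.iff_fg.1 inferInstance) n

theorem exists_eq_dual_mul {F : E → K} {ℓ : Dual K E} (hF : F ∈ forms K E (n + 1)) (hℓ : ℓ ≠ 0)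
    (h : ∀ w, ℓ w = 0 → F w = 0) : ∃ G ∈ forms K E n, F = ℓ * G := by
  obtain ⟨v, hv⟩ := LinearMap.surjective hℓ 1
  obtain ⟨G, hG, hFG⟩ := exists_eq_dual_mul_add_projection hF ℓ v
  refine ⟨G, hG, funext fun w => ?_⟩
  rw [hFG w, h (w - ℓ w • v) (by simp [hv]), add_zero, Pi.mul_apply]

end Field

end forms

section Real

theorem apply_zero_nonneg_of_forall_pos {ψ : ℝ → ℝ} (hψ : Continuous ψ) (h : ∀ t > 0, 0 ≤ ψ t) :
    0 ≤ ψ 0 :=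
  ge_of_tendsto ((hψ.tendsto 0).mono_left nhdsWithin_le_nhds)
    (eventually_mem_nhdsWithin.mono h : ∀ᶠ t in 𝓝[>] (0 : ℝ), 0 ≤ ψ t)

theorem apply_zero_eq_zero_of_forall_mul_nonneg {ψ : ℝ → ℝ} (hψ : Continuous ψ)
    (h : ∀ t, 0 ≤ t * ψ t) : ψ 0 = 0 := by
  have hright : 0 ≤ ψ 0 := apply_zero_nonneg_of_forall_pos hψ fun t ht =>
    nonneg_of_mul_nonneg_right (h t) ht
  have hleft : 0 ≤ -ψ (-0) :=
    apply_zero_nonneg_of_forall_pos (ψ := fun t => -ψ (-t)) (by fun_prop) fun t ht =>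
      nonneg_of_mul_nonneg_right (by simpa using h (-t)) ht
  rw [neg_zero] at hleft
  linarith

theorem nonneg_of_forall_cubic_nonneg {a b c d : ℝ}
    (h : ∀ x > 0, 0 ≤ a * x ^ 3 + b * x ^ 2 + c * x + d) : 0 ≤ a := by
  let ψ : ℝ → ℝ := fun t => a + b * t + c * t ^ 2 + d * t ^ 3
  suffices 0 ≤ ψ 0 by simpa [ψ] using this
  refine apply_zero_nonneg_of_forall_pos (by fun_prop) fun t ht => ?_
  have hrev : ψ t = t ^ 3 * (a * t⁻¹ ^ 3 + b * t⁻¹ ^ 2 + c * t⁻¹ + d) := by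
    simp only [ψ]
    field_simp
  rw [hrev]
  exact mul_nonneg (by positivity) (h _ (inv_pos.2 ht))

end Real

section Normed

variable {E : Type*} [NormedAddCommGroup E] [NormedSpace ℝ E] {ℓ : Dual ℝ E}

theorem dense_setOf_dual_ne_zero (hℓ : ℓ ≠ 0) : Dense {w | ℓ w ≠ 0} := by
  rw [← Set.compl_ofPred, ← interior_eq_empty_iff_dense_compl, ← Set.not_nonempty_iff_eq_empty]
  exact fun h => hℓ (LinearMap.ker_eq_top.1 ((LinearMap.ker ℓ).eq_top_of_nonempty_interior' h))

theorem le_of_dual_sq_mul_le {a b : E → ℝ} (hℓ : ℓ ≠ 0) (ha : Continuous a) (hb : Continuous b)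
    (h : ⇑ℓ ^ 2 * a ≤ ⇑ℓ ^ 2 * b) : a ≤ b :=
  (dense_setOf_dual_ne_zero hℓ).induction
    (fun w hw => le_of_mul_le_mul_left (h w) (sq_pos_of_ne_zero hw)) (isClosed_le ha hb)

theorem eq_of_dual_mul_eq {a b : E → ℝ} (hℓ : ℓ ≠ 0) (ha : Continuous a) (hb : Continuous b)
    (h : ⇑ℓ * a = ⇑ℓ * b) : a = b :=
  ha.ext_on (dense_setOf_dual_ne_zero hℓ) hb fun _ hw => mul_left_cancel₀ hw (congrFun h _)

variable [FiniteDimensional ℝ E] {n : ℕ} {F : E → ℝ}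

theorem forms.continuous (hF : F ∈ forms ℝ E n) : Continuous F :=
  forms.induction (P := fun _ F => Continuous F) (fun _ => continuous_const)
    (fun _ _ _ _ _ => Continuous.add)
    (fun _ ℓ _ _ => ℓ.continuous_of_finiteDimensional.mul) hF

theorem exists_eq_dual_sq_mul_of_nonneg (hF : F ∈ forms ℝ E (n + 2)) (hF0 : 0 ≤ F) (hℓ : ℓ ≠ 0)
    (h : ∀ w, ℓ w = 0 → F w = 0) : ∃ k ∈ forms ℝ E n, 0 ≤ k ∧ F = ⇑ℓ ^ 2 * k := by
  obtain ⟨v, hv⟩ := LinearMap.surjective hℓ 1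
  obtain ⟨G, hG, rfl⟩ := forms.exists_eq_dual_mul hF hℓ h
  have hcont := forms.continuous hG
  -- Along a line transverse to the kernel, `F` is `t * G`, so `G` changes sign where `t` does.
  have hGker : ∀ w, ℓ w = 0 → G w = 0 := fun w hw => by
    have hline : ∀ t : ℝ, 0 ≤ t * G (w + t • v) := fun t => by
      simpa [hw, hv] using hF0 (w + t • v)
    simpa using apply_zero_eq_zero_of_forall_mul_nonneg (by fun_prop) hline
  obtain ⟨k, hk, rfl⟩ := forms.exists_eq_dual_mul hG hℓ hGker
  have hsq : ⇑ℓ * (ℓ * k) = ⇑ℓ ^ 2 * k := by ring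
  refine ⟨k, hk, le_of_dual_sq_mul_le hℓ continuous_const (forms.continuous hk) ?_, hsq⟩
  rwa [mul_zero, ← hsq]

theorem exists_pos_smul_le [Nontrivial E] {G : E → ℝ} (hF : F ∈ forms ℝ E n)
    (hG : G ∈ forms ℝ E n) (hpos : ∀ v ≠ 0, 0 < F v) : ∃ μ > (0 : ℝ), μ • G ≤ F := by
  have : ProperSpace E := FiniteDimensional.proper ℝ E
  have hFc := forms.continuous hF
  have hGc := forms.continuous hG
  obtain ⟨C, hC⟩ := (isCompact_sphere (0 : E) 1).exists_bound_of_continuousOn <|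
    hGc.continuousOn.div hFc.continuousOn fun s hs => (hpos s (ne_of_mem_sphere hs one_ne_zero)).ne'
  refine ⟨(|C| + 1)⁻¹, by positivity, (dense_compl_singleton 0).induction (fun v hv => ?_)
    (isClosed_le (by fun_prop) hFc)⟩
  obtain ⟨s, hs, hsv⟩ : ∃ s ∈ sphere (0 : E) 1, ‖v‖ • s = v :=
    ⟨NormedSpace.normalize v, by simpa using hv, NormedSpace.norm_smul_normalize v⟩
  have hratio : G s / F s ≤ C := (le_abs_self _).trans (hC s hs)
  have hle : G s ≤ (|C| + 1) * F s := by
    rw [← div_le_iff₀ (hpos s (ne_of_mem_sphere hs one_ne_zero))]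
    linarith [le_abs_self C]
  rw [Pi.smul_apply, smul_eq_mul, inv_mul_le_iff₀ (by positivity), ← hsv, forms.map_smul hF,
    forms.map_smul hG, mul_left_comm]
  exact mul_le_mul_of_nonneg_left hle (by positivity)

end Normed

section DominatesSq

variable {E E' : Type*} [AddCommGroup E] [Module ℝ E] [AddCommGroup E'] [Module ℝ E']
  {d : ℕ} {F q : E → ℝ}

/-- `F` dominates the square of some nonzero form `q` of degree `d`, so that `q ^ 2` can be split
off from `F` without losing nonnegativity. -/
def DominatesSq (d : ℕ) (F : E → ℝ) : Prop :=
  ∃ q ∈ forms ℝ E d, q ≠ 0 ∧ q ^ 2 ≤ F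

namespace DominatesSq

theorem of_smul_sq_le {μ : ℝ} (hμ : 0 < μ) (hq : q ∈ forms ℝ E d) (hq0 : q ≠ 0)
    (h : μ • q ^ 2 ≤ F) : DominatesSq d F := by
  refine ⟨√μ • q, Submodule.smul_mem _ _ hq, smul_ne_zero (Real.sqrt_pos.2 hμ).ne' hq0, ?_⟩
  rwa [smul_pow, Real.sq_sqrt hμ.le]

theorem of_comp_linearEquiv (e : E' ≃ₗ[ℝ] E) (h : DominatesSq d (F ∘ e)) : DominatesSq d F := by
  obtain ⟨q, hq, hq0, hle⟩ := h
  refine ⟨q ∘ e.symm, forms.comp_mem hq e.symm.toLinearMap, fun h0 => hq0 ?_, fun v => ?_⟩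
  · ext v
    simpa using congrFun h0 (e v)
  · simpa using hle (e.symm v)

end DominatesSq

end DominatesSq

section Normed

variable {E : Type*} [NormedAddCommGroup E] [NormedSpace ℝ E] [FiniteDimensional ℝ E]
  {ℓ : Dual ℝ E} {d n : ℕ} {F : E → ℝ}

theorem forms.dual_mul_ne_zero {q : E → ℝ} (hℓ : ℓ ≠ 0) (hq : q ∈ forms ℝ E n) (hq0 : q ≠ 0) :
    ⇑ℓ * q ≠ 0 := fun h =>
  hq0 <| eq_of_dual_mul_eq hℓ (forms.continuous hq) continuous_zero (by rw [h, mul_zero])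

theorem DominatesSq.dual_sq_mul (hℓ : ℓ ≠ 0) (h : DominatesSq d F) :
    DominatesSq (d + 1) (⇑ℓ ^ 2 * F) := by
  obtain ⟨q, hq, hq0, hle⟩ := h
  refine ⟨ℓ * q, ?_, forms.dual_mul_ne_zero hℓ hq hq0, ?_⟩
  · rw [add_comm]
    exact forms.mul_mem (forms.dual_mem ℓ) hq
  · rw [mul_pow]
    exact mul_le_mul_of_nonneg_left hle fun _ => sq_nonneg _

theorem dominatesSq_of_pos [Nontrivial E] (hF : F ∈ forms ℝ E (2 * d))
    (hpos : ∀ v ≠ 0, 0 < F v) : DominatesSq d F := by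
  obtain ⟨v, hv⟩ := exists_ne (0 : E)
  obtain ⟨ℓ, hℓ⟩ := Projective.exists_dual_eq_one ℝ hv
  have hq : ⇑ℓ ^ d ∈ forms ℝ E d := by simpa using forms.pow_mem (forms.dual_mem ℓ) d
  have hq2 : (⇑ℓ ^ d) ^ 2 ∈ forms ℝ E (2 * d) := by
    rw [mul_comm]
    exact forms.pow_mem hq 2
  obtain ⟨μ, hμ, hle⟩ := exists_pos_smul_le hF hq2 hpos
  exact .of_smul_sq_le hμ hq (fun h => by simpa [hℓ] using congrFun h v) hle

theorem exists_eq_dual_sq_mul_of_mul_eq {f s : E → ℝ} (hℓ : ℓ ≠ 0) (hf : Continuous f)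
    (hf0 : ∀ v ≠ 0, f v ≠ 0) (hs : Continuous s) (hF : F ∈ forms ℝ E (n + 2)) (hF0 : 0 ≤ F)
    (h : f * F = ⇑ℓ ^ 2 * s) : ∃ k ∈ forms ℝ E n, 0 ≤ k ∧ F = ⇑ℓ ^ 2 * k ∧ f * k = s := by
  have hker : ∀ w, ℓ w = 0 → F w = 0 := fun w hw => by
    obtain rfl | hw0 := eq_or_ne w 0
    · exact forms.map_zero hF
    · simpa [hw, hf0 w hw0] using congrFun h w
  obtain ⟨k, hk, hk0, rfl⟩ := exists_eq_dual_sq_mul_of_nonneg hF hF0 hℓ hker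
  have hkc := forms.continuous hk
  have hℓc := ℓ.continuous_of_finiteDimensional
  refine ⟨k, hk, hk0, rfl, eq_of_dual_mul_eq hℓ (hf.mul hkc) hs <|
    eq_of_dual_mul_eq hℓ (hℓc.mul (hf.mul hkc)) (hℓc.mul hs) ?_⟩
  linear_combination h

end Normed

theorem exists_ne_zero_dual_eq_zero {K V : Type*} [Field K] [AddCommGroup V] [Module K V]
    (hV : 1 < finrank K V) (φ : Dual K V) : ∃ v ≠ 0, φ v = 0 := by
  have := FiniteDimensional.of_finrank_pos (zero_lt_one.trans hV)
  obtain ⟨v, hv, hv0⟩ := Submodule.exists_mem_ne_zero_of_ne_bot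
    (LinearMap.ker_ne_bot_of_finrank_lt (f := φ) (by simpa using hV))
  exact ⟨v, hv0, hv⟩

section BinaryAlgebra

variable {K U : Type*} [Field K] [AddCommGroup U] [Module K U] [hU : Fact (finrank K U = 2)]
  {f g : U → K} {ℓ m : Dual K U}

attribute [local instance] FiniteDimensional.of_fact_finrank_eq_two

theorem exists_smul_eq_of_dual_eq_zero (hℓ : ℓ ≠ 0) {u w : U} (hu : u ≠ 0)
    (hℓu : ℓ u = 0) (hℓw : ℓ w = 0) : ∃ t : K, t • u = w := by
  have hker : finrank K (LinearMap.ker ℓ) = 1 := by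
    have := Module.Dual.finrank_ker_add_one_of_ne_zero hℓ
    have := hU.out
    lia
  obtain ⟨t, ht⟩ := exists_smul_eq_of_finrank_eq_one hker
    (x := ⟨u, hℓu⟩) (Subtype.coe_ne_coe.1 hu) ⟨w, hℓw⟩
  exact ⟨t, congrArg Subtype.val ht⟩

theorem exists_eq_mul_add_dual_mul {k n : ℕ} (hℓ : ℓ ≠ 0)
    (hf : f ∈ forms K U (k + 1)) (hf0 : ∀ u ≠ 0, f u ≠ 0) (hg : g ∈ forms K U (n + k + 1)) :
    ∃ a ∈ forms K U n, ∃ b ∈ forms K U (n + k), g = a * f + ℓ * b := by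
  obtain ⟨u, hu, hℓu⟩ := exists_ne_zero_dual_eq_zero (by simp [hU.out]) ℓ
  obtain ⟨φ, hφ⟩ := Projective.exists_dual_eq_one K hu
  have ha : (g u / f u) • ⇑φ ^ n ∈ forms K U n :=
    Submodule.smul_mem _ _ (by simpa using forms.pow_mem (forms.dual_mem φ) n)
  have hrem : g - (g u / f u) • ⇑φ ^ n * f ∈ forms K U (n + k + 1) :=
    sub_mem hg (forms.mul_mem (m := n) (n := k + 1) ha hf)
  obtain ⟨b, hb, hgb⟩ := forms.exists_eq_dual_mul hrem hℓ fun w hw => by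
    obtain ⟨t, rfl⟩ := exists_smul_eq_of_dual_eq_zero hℓ hu hℓu hw
    simp only [Pi.sub_apply, Pi.mul_apply, Pi.smul_apply, Pi.pow_apply, forms.map_smul hg,
      forms.map_smul hf, map_smul, hφ, smul_eq_mul, mul_one]
    field_simp [hf0 u hu]
    ring
  exact ⟨_, ha, b, hb, by rw [← hgb]; ring⟩

theorem exists_eq_dual_mul_add_mul_mul (hf : f ∈ forms K U 2) (hf0 : ∀ u ≠ 0, f u ≠ 0)
    (hg : g ∈ forms K U 3) (hℓ : ℓ ≠ 0) (hm : m ≠ 0) :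
    ∃ a : Dual K U, ∃ p ∈ forms K U 1, g = a * f + ℓ * m * p := by
  obtain ⟨a, ha, g', hg', hgg'⟩ := exists_eq_mul_add_dual_mul (n := 1) hℓ hf hf0 hg
  obtain ⟨b, hb, p, hp, hg'p⟩ := exists_eq_mul_add_dual_mul (n := 0) hm hf hf0 hg'
  obtain ⟨φ, hφ⟩ := forms.mem_one.1 (add_mem ha (forms.mul_mem (forms.dual_mem ℓ) hb))
  refine ⟨φ, p, hp, ?_⟩
  rw [← hφ, hgg', hg'p]
  ring

end BinaryAlgebra

section Binary

variable {U : Type*} [NormedAddCommGroup U] [NormedSpace ℝ U] [hU : Fact (finrank ℝ U = 2)]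

attribute [local instance] FiniteDimensional.of_fact_finrank_eq_two

theorem pos_or_eq_dual_sq_mul {n : ℕ} {F : U → ℝ} (hF : F ∈ forms ℝ U (n + 2)) (hF0 : 0 ≤ F) :
    (∀ u ≠ 0, 0 < F u) ∨
      ∃ ℓ : Dual ℝ U, ℓ ≠ 0 ∧ ∃ k ∈ forms ℝ U n, 0 ≤ k ∧ F = ⇑ℓ ^ 2 * k := by
  refine or_iff_not_imp_left.2 fun h => ?_
  push Not at h
  obtain ⟨u, hu, hFu⟩ := h
  obtain ⟨ℓ, hℓ, hℓu⟩ := exists_ne_zero_dual_eq_zero (V := Dual ℝ U)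
    (by simp [Subspace.dual_finrank_eq, hU.out]) (Dual.eval ℝ U u)
  refine ⟨ℓ, hℓ, exists_eq_dual_sq_mul_of_nonneg hF hF0 hℓ fun w hw => ?_⟩
  obtain ⟨t, rfl⟩ := exists_smul_eq_of_dual_eq_zero hℓ hu hℓu hw
  rw [forms.map_smul hF, hFu.antisymm (hF0 u), mul_zero]

theorem dominatesSq_of_nonneg {d : ℕ} {F : U → ℝ} (hF : F ∈ forms ℝ U (2 * d)) (hF0 : 0 ≤ F)
    (hne : F ≠ 0) : DominatesSq d F := by
  have : Nontrivial U := Module.nontrivial_of_finrank_pos (R := ℝ) (by simp [hU.out])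
  induction d generalizing F with
  | zero =>
    obtain ⟨c, rfl⟩ := forms.mem_zero.1 hF
    have hc : c ≠ 0 := fun h => hne (by rw [h]; rfl)
    exact dominatesSq_of_pos hF fun _ _ => (hF0 0).lt_of_ne' hc
  | succ d ih =>
    obtain hpos | ⟨ℓ, hℓ, k, hk, hk0, rfl⟩ := pos_or_eq_dual_sq_mul hF hF0
    · exact dominatesSq_of_pos hF hpos
    · exact (ih hk hk0 (right_ne_zero_of_mul hne)).dual_sq_mul hℓ

end Binary

section QuadraticInFst

section Function

variable {U : Type*} {f g h : U → ℝ}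

/-- The function `(x, u) ↦ x² f(u) + 2 x g(u) + h(u)`, quadratic in its first variable. With
`f`, `g`, `h` forms of degrees `2`, `3`, `4` it is the shape of a nonnegative quartic form vanishing
at `(1, 0)`. -/
def quadraticInFst (f g h : U → ℝ) : ℝ × U → ℝ :=
  fun p => p.1 ^ 2 * f p.2 + 2 * p.1 * g p.2 + h p.2

theorem quadraticInFst_apply (x : ℝ) (u : U) :
    quadraticInFst f g h (x, u) = x ^ 2 * f u + 2 * x * g u + h u :=
  rfl

theorem quadraticInFst_add_mul_apply (a : U → ℝ) (x : ℝ) (u : U) :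
    quadraticInFst f (g + a * f) (h + 2 * (a * g) + a ^ 2 * f) (x, u) =
      quadraticInFst f g h (x + a u, u) := by
  simp only [quadraticInFst_apply, Pi.add_apply, Pi.mul_apply, Pi.pow_apply, Pi.ofNat_apply]
  ring

theorem coeff_nonneg_of_quadraticInFst_nonneg (hF : 0 ≤ quadraticInFst f g h) : 0 ≤ f := fun u =>
  nonneg_of_forall_cubic_nonneg (b := 2 * g u) (c := h u) (d := 0) fun x hx => by
    have := mul_nonneg hx.le (hF (x, u))
    rw [quadraticInFst_apply] at this
    linarith

theorem sq_le_mul_of_quadraticInFst_nonneg (hF : 0 ≤ quadraticInFst f g h) : g ^ 2 ≤ f * h :=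
  fun u => by
    have hdisc : discrim (f u) (2 * g u) (h u) ≤ 0 := discrim_le_zero fun x => by
      have : 0 ≤ quadraticInFst f g h (x, u) := hF (x, u)
      rw [quadraticInFst_apply] at this
      linarith
    rw [discrim] at hdisc
    simp only [Pi.pow_apply, Pi.mul_apply]
    linarith

theorem fst_mul_add_eq_zero_iff :
    (fun p : ℝ × U => p.1 * f p.2 + g p.2) = 0 ↔ f = 0 ∧ g = 0 := by
  refine ⟨fun hfg => ?_, by rintro ⟨rfl, rfl⟩; ext; simp⟩
  have hg : g = 0 := funext fun u => by simpa using congrFun hfg (0, u)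
  exact ⟨funext fun u => by simpa [hg] using congrFun hfg (1, u), hg⟩

end Function

section Module

variable {U : Type*} [AddCommGroup U] [Module ℝ U] {d : ℕ} {f g h k : U → ℝ}

theorem exists_eq_quadraticInFst {F : ℝ × U → ℝ} (hF : F ∈ forms ℝ (ℝ × U) 4) (hF0 : 0 ≤ F)
    (hzero : F (1, 0) = 0) : ∃ f ∈ forms ℝ U 2, ∃ g ∈ forms ℝ U 3, ∃ h ∈ forms ℝ U 4,
      F = quadraticInFst f g h := by
  obtain ⟨c, ℓ, f, hf, g, hg, h, hh, hFeq⟩ := forms.exists_eq_quartic_in_fst hF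
  have hc : c = 0 := by
    simpa [hFeq, forms.map_zero hf, forms.map_zero hg, forms.map_zero hh] using hzero
  have hℓ0 : ∀ u, 0 ≤ ℓ u := fun u => nonneg_of_forall_cubic_nonneg fun x _ => by
    simpa [hFeq, hc] using hF0 (x, u)
  have hℓ : ∀ u, ℓ u = 0 := fun u => le_antisymm (by simpa using hℓ0 (-u)) (hℓ0 u)
  refine ⟨f, hf, (1 / 2 : ℝ) • g, Submodule.smul_mem _ _ hg, h, hh, funext fun ⟨x, u⟩ => ?_⟩
  simp only [hFeq, hc, hℓ, quadraticInFst, Pi.smul_apply, smul_eq_mul]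
  ring

theorem DominatesSq.of_quadraticInFst_add_mul (a : Dual ℝ U)
    (hF : DominatesSq d (quadraticInFst f (g + a * f) (h + 2 * (a * g) + ⇑a ^ 2 * f))) :
    DominatesSq d (quadraticInFst f g h) := by
  let e : (ℝ × U) ≃ₗ[ℝ] ℝ × U :=
    LinearEquiv.transvection (f := a ∘ₗ LinearMap.snd ℝ ℝ U) (v := (1, 0)) (by simp)
  refine .of_comp_linearEquiv e ?_
  convert hF using 1
  ext ⟨x, u⟩
  rw [quadraticInFst_add_mul_apply, Function.comp_apply]
  congr 1
  simp [e, LinearMap.transvection.apply]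

theorem dominatesSq_quadraticInFst_of_smul_le {μ : ℝ} (hμ : 0 < μ) (hfpos : ∀ u ≠ 0, 0 < f u)
    (hk : k ∈ forms ℝ U (d + 1)) (hk0 : k ≠ 0) (hle : μ • (f * k ^ 2) ≤ f * h - g ^ 2)
    (hF0 : 0 ≤ quadraticInFst f g h) : DominatesSq (d + 1) (quadraticInFst f g h) := by
  refine .of_smul_sq_le hμ (forms.comp_mem hk (LinearMap.snd ℝ ℝ U)) (fun h0 => hk0 ?_)
    fun ⟨x, u⟩ => ?_
  · exact funext fun u => by simpa using congrFun h0 (0, u)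
  obtain rfl | hu := eq_or_ne u 0
  · simpa [forms.map_zero hk] using hF0 (x, 0)
  · have hdisc := hle u
    simp only [Pi.sub_apply, Pi.smul_apply, Pi.pow_apply, Pi.mul_apply, smul_eq_mul] at hdisc
    refine le_of_mul_le_mul_left ?_ (hfpos u hu)
    simp only [quadraticInFst_apply, Pi.smul_apply, Pi.pow_apply, Function.comp_apply,
      LinearMap.snd_apply, smul_eq_mul]
    -- `f F = (x f + g)² + (f h - g²)`
    nlinarith [sq_nonneg (x * f u + g u)]

end Module

section Normed

variable {U : Type*} [NormedAddCommGroup U] [NormedSpace ℝ U] [FiniteDimensional ℝ U]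
  {f g h r : U → ℝ} {ℓ m : Dual ℝ U}

theorem dominatesSq_quadraticInFst_of_eq_smul_sq {c : ℝ} (hc : 0 < c) (hℓ : ℓ ≠ 0)
    (hg : g ∈ forms ℝ U 3) (hh : Continuous h) (hF0 : 0 ≤ quadraticInFst (c • ⇑ℓ ^ 2) g h) :
    DominatesSq 2 (quadraticInFst (c • ⇑ℓ ^ 2) g h) := by
  have hle := sq_le_mul_of_quadraticInFst_nonneg hF0
  obtain ⟨b, hb, rfl⟩ := forms.exists_eq_dual_mul hg hℓ fun w hw => by
    have := hle w
    simp only [Pi.pow_apply, Pi.mul_apply, Pi.smul_apply, hw] at this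
    exact pow_eq_zero_iff two_ne_zero |>.1 (le_antisymm (by simpa using this) (sq_nonneg _))
  have hbh : b ^ 2 ≤ c • h :=
    le_of_dual_sq_mul_le hℓ ((forms.continuous hb).pow 2) (hh.const_smul c) <| by
      simpa only [mul_pow, smul_mul_assoc, mul_smul_comm] using hle
  refine .of_smul_sq_le (inv_pos.2 hc)
    (forms.fst_mul_add_mem (Submodule.smul_mem _ c (forms.dual_mem ℓ)) hb) (fun h0 => ?_)
    fun ⟨x, u⟩ => ?_
  · exact smul_ne_zero hc.ne' (DFunLike.coe_injective.ne hℓ) (fst_mul_add_eq_zero_iff.1 h0).1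
  · have := hbh u
    -- `c F = (c x ℓ + b)² + (c h - b²)`
    simp only [quadraticInFst, Pi.smul_apply, Pi.pow_apply, Pi.mul_apply, smul_eq_mul] at this ⊢
    rw [inv_mul_le_iff₀ hc]
    linarith

theorem exists_eq_smul_sq_of_discrim_eq {p : U → ℝ} (hf : Continuous f)
    (hf0 : ∀ u ≠ 0, f u ≠ 0) (hp : Continuous p) (hh : h ∈ forms ℝ U 4) (hh0 : 0 ≤ h)
    (hℓ : ℓ ≠ 0) (hm : m ≠ 0) (hr : Continuous r) (hr0 : 0 ≤ r)
    (hdisc : f * h - (⇑ℓ * m * p) ^ 2 = ⇑ℓ ^ 2 * (⇑m ^ 2 * r)) :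
    ∃ κ ≥ (0 : ℝ), h = κ • (⇑ℓ * m) ^ 2 ∧ p ^ 2 ≤ κ • f := by
  have hrp : Continuous (r + p ^ 2) := hr.add (hp.pow 2)
  have hmrp : Continuous (⇑m ^ 2 * (r + p ^ 2)) :=
    (m.continuous_of_finiteDimensional.pow 2).mul hrp
  obtain ⟨k, hk, hk0, hhk, hfk⟩ := exists_eq_dual_sq_mul_of_mul_eq hℓ hf hf0 hmrp hh hh0
    (by linear_combination hdisc)
  obtain ⟨_, hκ, hκ0, hkκ, hfκ⟩ := exists_eq_dual_sq_mul_of_mul_eq hm hf hf0 hrp hk hk0 hfk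
  obtain ⟨κ, rfl⟩ := forms.mem_zero.1 hκ
  refine ⟨κ, hκ0 0, ?_, fun u => ?_⟩
  · rw [hhk, hkκ, ← mul_assoc, ← mul_pow, mul_comm]
    rfl
  · calc p u ^ 2 ≤ r u + p u ^ 2 := le_add_of_nonneg_left (hr0 u)
      _ = f u * κ := (congrFun hfκ u).symm
      _ = κ * f u := mul_comm _ _

theorem dominatesSq_quadraticInFst_of_eq_mul {p : U → ℝ} {κ : ℝ} (hf : f ∈ forms ℝ U 2)
    (hfpos : ∀ u ≠ 0, 0 < f u) (hp : p ∈ forms ℝ U 1) (hℓ : ℓ ≠ 0) (hm : m ≠ 0) (hκ : 0 ≤ κ)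
    (hle : p ^ 2 ≤ κ • f) :
    DominatesSq 2 (quadraticInFst f (ℓ * m * p) (κ • (⇑ℓ * m) ^ 2)) := by
  have hℓm : ⇑ℓ * m ∈ forms ℝ U 2 := forms.mul_mem (forms.dual_mem ℓ) (forms.dual_mem m)
  have hℓm0 : ⇑ℓ * m ≠ 0 :=
    forms.dual_mul_ne_zero hℓ (forms.dual_mem m) (DFunLike.coe_injective.ne hm)
  obtain rfl | hκ := hκ.eq_or_lt
  · have hp0 : p = 0 := funext fun u => pow_eq_zero_iff two_ne_zero |>.1 <|
      le_antisymm (by simpa using hle u) (sq_nonneg _)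
    obtain ⟨v, hv⟩ := DFunLike.ne_iff.1 hℓ
    have : Nontrivial U := ⟨v, 0, fun h => hv (by simp [h])⟩
    obtain ⟨q, hq, hq0, hqf⟩ := dominatesSq_of_pos (d := 1) hf hfpos
    refine ⟨_, forms.fst_mul_add_mem hq (zero_mem _),
      fun h0 => hq0 (fst_mul_add_eq_zero_iff.1 h0).1, fun ⟨x, u⟩ => ?_⟩
    have := mul_le_mul_of_nonneg_left (hqf u) (sq_nonneg x)
    simpa [quadraticInFst_apply, hp0, mul_pow] using this
  · refine .of_smul_sq_le (inv_pos.2 hκ)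
      (forms.fst_mul_add_mem hp (Submodule.smul_mem _ κ hℓm))
      (fun h0 => smul_ne_zero hκ.ne' hℓm0 (fst_mul_add_eq_zero_iff.1 h0).2) fun ⟨x, u⟩ => ?_
    have := mul_le_mul_of_nonneg_left (hle u) (sq_nonneg x)
    -- `κ F = (x p + κ ℓ m)² + x² (κ f - p²)`
    simp only [quadraticInFst_apply, Pi.smul_apply, Pi.pow_apply, Pi.mul_apply,
      smul_eq_mul] at this ⊢
    rw [inv_mul_le_iff₀ hκ]
    linarith

end Normed

section Binary

variable {U : Type*} [NormedAddCommGroup U] [NormedSpace ℝ U] [hU : Fact (finrank ℝ U = 2)]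
  {f g h r : U → ℝ} {ℓ m : Dual ℝ U}

attribute [local instance] FiniteDimensional.of_fact_finrank_eq_two

theorem dominatesSq_quadraticInFst_zero {d : ℕ} (hh : h ∈ forms ℝ U (2 * d))
    (hF0 : 0 ≤ quadraticInFst 0 g h) (hne : quadraticInFst 0 g h ≠ 0) :
    DominatesSq d (quadraticInFst 0 g h) := by
  have hle := sq_le_mul_of_quadraticInFst_nonneg hF0
  have hg : g = 0 := funext fun u => pow_eq_zero_iff two_ne_zero |>.1 <|
    le_antisymm (by simpa using hle u) (sq_nonneg _)
  have hFh : quadraticInFst 0 g h = h ∘ LinearMap.snd ℝ ℝ U := by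
    ext
    simp [quadraticInFst, hg]
  rw [hFh] at hF0 hne ⊢
  obtain ⟨q, hq, hq0, hqh⟩ := dominatesSq_of_nonneg hh (fun u => hF0 (0, u))
    fun h0 => hne (by rw [h0]; rfl)
  refine ⟨_, forms.comp_mem hq (LinearMap.snd ℝ ℝ U), fun h0 => hq0 ?_, fun p => hqh p.2⟩
  exact funext fun u => congrFun h0 (0, u)

theorem dominatesSq_quadraticInFst_of_discrim_eq (hf : f ∈ forms ℝ U 2)
    (hfpos : ∀ u ≠ 0, 0 < f u) (hg : g ∈ forms ℝ U 3) (hh : h ∈ forms ℝ U 4)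
    (hF0 : 0 ≤ quadraticInFst f g h) (hℓ : ℓ ≠ 0) (hm : m ≠ 0) (hr : Continuous r) (hr0 : 0 ≤ r)
    (hdisc : f * h - g ^ 2 = ⇑ℓ ^ 2 * (⇑m ^ 2 * r)) : DominatesSq 2 (quadraticInFst f g h) := by
  have hf0 : ∀ u ≠ 0, f u ≠ 0 := fun u hu => (hfpos u hu).ne'
  obtain ⟨a, p, hp, hgap⟩ := exists_eq_dual_mul_add_mul_mul hf hf0 hg hℓ hm
  have hg' : g + ⇑(-a) * f = ℓ * m * p := by
    rw [hgap, LinearMap.coe_neg]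
    ring
  let h' := h + 2 * (⇑(-a) * g) + ⇑(-a) ^ 2 * f
  have hh' : h' ∈ forms ℝ U 4 := by
    have hag : ⇑(-a) * g ∈ forms ℝ U 4 := forms.mul_mem (forms.dual_mem _) hg
    have haf : ⇑(-a) ^ 2 * f ∈ forms ℝ U 4 :=
      forms.mul_mem (forms.pow_mem (forms.dual_mem _) 2) hf
    simp only [h', two_mul]
    exact add_mem (add_mem hh (add_mem hag hag)) haf
  have hh'0 : 0 ≤ h' := fun u => by
    have : quadraticInFst f (g + ⇑(-a) * f) h' (0, u) = h' u := by simp [quadraticInFst_apply]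
    rw [← this, quadraticInFst_add_mul_apply]
    exact hF0 _
  have hdisc' : f * h' - (⇑ℓ * m * p) ^ 2 = ⇑ℓ ^ 2 * (⇑m ^ 2 * r) := by
    rw [← hg', ← hdisc]
    ring
  obtain ⟨κ, hκ, hκh, hle⟩ := exists_eq_smul_sq_of_discrim_eq (forms.continuous hf) hf0
    (forms.continuous hp) hh' hh'0 hℓ hm hr hr0 hdisc'
  refine .of_quadraticInFst_add_mul (-a) ?_
  change DominatesSq 2 (quadraticInFst f (g + ⇑(-a) * f) h')
  rw [hg', hκh]
  exact dominatesSq_quadraticInFst_of_eq_mul hf hfpos hp hℓ hm hκ hle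

theorem dominatesSq_quadraticInFst_of_pos (hf : f ∈ forms ℝ U 2) (hfpos : ∀ u ≠ 0, 0 < f u)
    (hg : g ∈ forms ℝ U 3) (hh : h ∈ forms ℝ U 4) (hF0 : 0 ≤ quadraticInFst f g h) :
    DominatesSq 2 (quadraticInFst f g h) := by
  have : Nontrivial U := Module.nontrivial_of_finrank_pos (R := ℝ) (by simp [hU.out])
  have hD : f * h - g ^ 2 ∈ forms ℝ U 6 := sub_mem (forms.mul_mem hf hh) (forms.pow_mem hg 2)
  have hD0 : 0 ≤ f * h - g ^ 2 := sub_nonneg.2 (sq_le_mul_of_quadraticInFst_nonneg hF0)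
  have hmul : ∀ ℓ : Dual ℝ U, ⇑ℓ * ℓ ∈ forms ℝ U 2 := fun ℓ =>
    forms.mul_mem (forms.dual_mem ℓ) (forms.dual_mem ℓ)
  have hmul0 : ∀ ℓ : Dual ℝ U, ℓ ≠ 0 → ⇑ℓ * ℓ ≠ 0 := fun ℓ hℓ =>
    forms.dual_mul_ne_zero hℓ (forms.dual_mem ℓ) (DFunLike.coe_injective.ne hℓ)
  obtain hDpos | ⟨ℓ, hℓ, k, hk, hk0, hDk⟩ := pos_or_eq_dual_sq_mul hD hD0
  · obtain ⟨ℓ, hℓ⟩ := exists_ne (0 : Dual ℝ U)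
    obtain ⟨μ, hμ, hle⟩ :=
      exists_pos_smul_le hD (forms.mul_mem hf (forms.pow_mem (hmul ℓ) 2)) hDpos
    exact dominatesSq_quadraticInFst_of_smul_le hμ hfpos (hmul ℓ) (hmul0 ℓ hℓ) hle hF0
  obtain hkpos | ⟨m, hm, r, hr, hr0, rfl⟩ := pos_or_eq_dual_sq_mul hk hk0
  · obtain ⟨μ, hμ, hle⟩ :=
      exists_pos_smul_le hk (forms.mul_mem hf (forms.pow_mem (forms.dual_mem ℓ) 2)) hkpos
    refine dominatesSq_quadraticInFst_of_smul_le hμ hfpos (hmul ℓ) (hmul0 ℓ hℓ) ?_ hF0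
    calc μ • (f * (⇑ℓ * ℓ) ^ 2) = ⇑ℓ ^ 2 * (μ • (f * ⇑ℓ ^ 2)) := by
          rw [mul_smul_comm]
          ring_nf
      _ ≤ ⇑ℓ ^ 2 * k := mul_le_mul_of_nonneg_left hle fun _ => sq_nonneg _
      _ = f * h - g ^ 2 := hDk.symm
  · exact dominatesSq_quadraticInFst_of_discrim_eq hf hfpos hg hh hF0 hℓ hm
      (forms.continuous hr) hr0 hDk

theorem dominatesSq_quadraticInFst (hf : f ∈ forms ℝ U 2) (hg : g ∈ forms ℝ U 3)
    (hh : h ∈ forms ℝ U 4) (hF0 : 0 ≤ quadraticInFst f g h) (hne : quadraticInFst f g h ≠ 0) :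
    DominatesSq 2 (quadraticInFst f g h) := by
  obtain hfpos | ⟨ℓ, hℓ, k, hk, hk0, rfl⟩ :=
    pos_or_eq_dual_sq_mul hf (coeff_nonneg_of_quadraticInFst_nonneg hF0)
  · exact dominatesSq_quadraticInFst_of_pos hf hfpos hg hh hF0
  obtain ⟨c, rfl⟩ := forms.mem_zero.1 hk
  have hsmul : ⇑ℓ ^ 2 * Function.const U c = c • ⇑ℓ ^ 2 := mul_comm _ _
  rw [hsmul] at hF0 hne ⊢
  have hc : 0 ≤ c := hk0 0
  obtain rfl | hc := hc.eq_or_lt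
  · rw [zero_smul] at hF0 hne ⊢
    exact dominatesSq_quadraticInFst_zero (d := 2) hh hF0 hne
  · exact dominatesSq_quadraticInFst_of_eq_smul_sq hc hℓ hg (forms.continuous hh) hF0

end Binary

end QuadraticInFst

theorem dominatesSq_of_quartic_prod {U : Type*} [NormedAddCommGroup U] [NormedSpace ℝ U]
    [Fact (finrank ℝ U = 2)] {F : ℝ × U → ℝ} (hF : F ∈ forms ℝ (ℝ × U) 4) (hF0 : 0 ≤ F)
    (hne : F ≠ 0) (hzero : F (1, 0) = 0) : DominatesSq 2 F := by
  obtain ⟨f, hf, g, hg, h, hh, rfl⟩ := exists_eq_quadraticInFst hF hF0 hzero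
  exact dominatesSq_quadraticInFst hf hg hh hF0 hne

theorem dominatesSq_of_ternary_quartic {E : Type*} [NormedAddCommGroup E] [NormedSpace ℝ E]
    (hE : finrank ℝ E = 3) {F : E → ℝ} (hF : F ∈ forms ℝ E 4) (hF0 : 0 ≤ F) (hne : F ≠ 0) :
    DominatesSq 2 F := by
  have := FiniteDimensional.of_finrank_eq_succ hE
  have : Nontrivial E := Module.nontrivial_of_finrank_pos (R := ℝ) (by simp [hE])
  by_cases hpos : ∀ v ≠ 0, 0 < F v
  · exact dominatesSq_of_pos hF hpos
  push Not at hpos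
  obtain ⟨v, hv, hFv⟩ := hpos
  have : Fact (finrank ℝ (ℝ × ℝ) = 2) := ⟨by simp⟩
  let e₀ : (ℝ × ℝ × ℝ) ≃ₗ[ℝ] E := LinearEquiv.ofFinrankEq _ _ (by simp [hE])
  obtain ⟨T, hT⟩ : ∃ T : E ≃L[ℝ] E, T (e₀ (1, 0)) = v :=
    SeparatingDual.exists_continuousLinearEquiv_apply_eq (by simp) hv
  let e := e₀.trans T.toLinearEquiv
  refine .of_comp_linearEquiv e <| dominatesSq_of_quartic_prod (forms.comp_mem hF e.toLinearMap)
    (fun p => hF0 (e p)) (fun h => hne ?_) ?_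
  · ext v
    simpa using congrFun h (e.symm v)
  · simpa [e, hT] using hFv.antisymm (hF0 v)

section SumOfSquares

open scoped Matrix

theorem dotProduct_transpose_mul_self_mulVec {κ ι : Type*} [Fintype κ] [Fintype ι]
    (A : Matrix κ ι ℝ) (v : ι → ℝ) : v ⬝ᵥ (Aᵀ * A) *ᵥ v = ∑ k, (A k ⬝ᵥ v) ^ 2 := by
  rw [← Matrix.mulVec_mulVec, Matrix.dotProduct_mulVec, Matrix.vecMul_transpose]
  simp only [sq]
  rfl

open scoped MatrixOrder in
theorem exists_transpose_mul_self_eq {κ ι : Type*} [Fintype κ] [Fintype ι] (A : Matrix κ ι ℝ) :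
    ∃ B : Matrix ι ι ℝ, Bᵀ * B = Aᵀ * A := by
  classical
  obtain ⟨B, hB⟩ := CStarAlgebra.nonneg_iff_eq_star_mul_self.1
    (Matrix.posSemidef_conjTranspose_mul_self A).nonneg
  refine ⟨B, ?_⟩
  simpa [Matrix.star_eq_conjTranspose, Matrix.conjTranspose_eq_transpose_of_trivial] using hB.symm

theorem exists_fin_finrank_sum_sq_eq {V κ : Type*} [AddCommGroup V] [Module ℝ V]
    [FiniteDimensional ℝ V] [Fintype κ] (g : κ → V) :
    ∃ h : Fin (finrank ℝ V) → V, ∀ φ : Dual ℝ V, ∑ i, φ (h i) ^ 2 = ∑ k, φ (g k) ^ 2 := by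
  let b := finBasis ℝ V
  let A : Matrix κ (Fin (finrank ℝ V)) ℝ := fun k => b.equivFun (g k)
  obtain ⟨B, hB⟩ := exists_transpose_mul_self_eq A
  refine ⟨fun i => b.equivFun.symm (B i), fun φ => ?_⟩
  have hφ : ∀ x, φ (b.equivFun.symm x) = x ⬝ᵥ (φ ∘ b) := fun x => by
    simp [Basis.equivFun_symm_apply, dotProduct]
  have hg : ∀ k, φ (g k) = A k ⬝ᵥ (φ ∘ b) := fun k => by
    rw [← hφ, LinearEquiv.symm_apply_apply]
  simp only [hφ, hg, ← dotProduct_transpose_mul_self_mulVec, hB]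

variable {X : Type*} {V : Submodule ℝ (X → ℝ)} [FiniteDimensional ℝ V] {F : X → ℝ}

theorem isCompact_setOf_sum_sq_le {κ : Type*} [Fintype κ] :
    IsCompact {g : κ → V | ∑ i, (g i : X → ℝ) ^ 2 ≤ F} := by
  have hclosed : IsClosed {g : κ → V | ∑ i, (g i : X → ℝ) ^ 2 ≤ F} :=
    isClosed_le (by fun_prop) continuous_const
  have hbox : IsCompact {q : V | ∀ x, (q : X → ℝ) x ∈ Set.Icc (-√(F x)) (√(F x))} := by
    have := V.closed_of_finiteDimensional.isClosedEmbedding_subtypeVal.isCompact_preimage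
      (isCompact_univ_pi fun x => isCompact_Icc (a := -√(F x)) (b := √(F x)))
    simpa [Set.preimage, Set.pi] using this
  refine (isCompact_univ_pi fun _ : κ => hbox).of_isClosed_subset hclosed fun g hg i _ x => ?_
  refine abs_le.1 (Real.abs_le_sqrt ?_)
  calc (g i : X → ℝ) x ^ 2
      ≤ ∑ j, (g j : X → ℝ) x ^ 2 := Finset.single_le_sum
        (f := fun j => (g j : X → ℝ) x ^ 2) (fun j _ => sq_nonneg _) (Finset.mem_univ i)
    _ ≤ F x := by simpa using hg x

variable (V) in
theorem exists_maximal_sum_sq_le (hF : 0 ≤ F) : ∃ g : Fin (finrank ℝ V) → V,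
    ∑ i, (g i : X → ℝ) ^ 2 ≤ F ∧
      ∀ q : V, ∑ i, (g i : X → ℝ) ^ 2 + (q : X → ℝ) ^ 2 ≤ F → q = 0 := by
  let b := finBasis ℝ V
  -- Maximize the trace of the Gram matrix of `g`: a further square `q ^ 2` could be absorbed into
  -- `finrank ℝ V` squares with a strictly larger trace.
  have hcont : ∀ j, Continuous (b.coord j) := fun j => (b.coord j).continuous_of_finiteDimensional
  obtain ⟨g, hg, hmax⟩ := isCompact_setOf_sum_sq_le.exists_isMaxOn (s := {g | _ ≤ F})
    ⟨0, by simpa using hF⟩ (f := fun g : Fin (finrank ℝ V) → V => ∑ j, ∑ i, b.coord j (g i) ^ 2)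
    (Continuous.continuousOn (by fun_prop))
  refine ⟨g, hg, fun q hq => ?_⟩
  obtain ⟨h, hh⟩ := exists_fin_finrank_sum_sq_eq (Fin.cons q g : Fin (finrank ℝ V + 1) → V)
  simp only [Fin.sum_univ_succ, Fin.cons_zero, Fin.cons_succ] at hh
  have hhF : ∑ i, (h i : X → ℝ) ^ 2 ≤ F := fun x => by
    have hx := hh (LinearMap.proj x ∘ₗ V.subtype)
    have hqx := hq x
    simp at hx hqx ⊢
    linarith
  have hle : ∑ j, b.coord j q ^ 2 ≤ 0 := by
    have := hmax hhF
    simp only [hh, Set.mem_ofPred_eq, Finset.sum_add_distrib] at this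
    linarith
  refine b.ext_elem fun j => ?_
  have := (Finset.sum_eq_zero_iff_of_nonneg fun j _ => sq_nonneg (b.coord j q)).1
    (hle.antisymm (Finset.sum_nonneg fun j _ => sq_nonneg _)) j (Finset.mem_univ j)
  simpa using this

theorem exists_eq_sum_sq_of_forall_dominatesSq {E : Type*} [AddCommGroup E] [Module ℝ E]
    [FiniteDimensional ℝ E] {d : ℕ}
    (hdom : ∀ F ∈ forms ℝ E (2 * d), 0 ≤ F → F ≠ 0 → DominatesSq d F)
    {F : E → ℝ} (hF : F ∈ forms ℝ E (2 * d)) (hF0 : 0 ≤ F) :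
    ∃ n, ∃ g : Fin n → forms ℝ E d, F = ∑ i, (g i : E → ℝ) ^ 2 := by
  obtain ⟨g, hg, hmax⟩ := exists_maximal_sum_sq_le (forms ℝ E d) hF0
  refine ⟨_, g, by_contra fun hne => ?_⟩
  have hsum : ∑ i, (g i : E → ℝ) ^ 2 ∈ forms ℝ E (2 * d) := sum_mem fun i _ => by
    rw [mul_comm]
    exact forms.pow_mem (g i).2 2
  obtain ⟨q, hq, hq0, hle⟩ := hdom _ (sub_mem hF hsum) (sub_nonneg.2 hg) (sub_ne_zero.2 hne)
  exact hq0 (congrArg Subtype.val (hmax ⟨q, hq⟩ (add_le_of_le_sub_left hle)))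

end SumOfSquares

theorem stmt_10 (f : MvPolynomial (Fin 3) ℝ) (hhom : f.IsHomogeneous 4)
    (hpsd : ∀ p : Fin 3 → ℝ, 0 ≤ eval p f) :
    ∃ (n : ℕ) (g : Fin n → MvPolynomial (Fin 3) ℝ),
      (∀ i, (g i).IsHomogeneous 2) ∧ f = ∑ i, g i ^ 2 := by
  obtain ⟨n, q, hq⟩ := exists_eq_sum_sq_of_forall_dominatesSq (d := 2)
    (fun F => dominatesSq_of_ternary_quartic (by simp))
    (forms.mem_iff_exists_isHomogeneous.2 ⟨f, hhom, fun _ => rfl⟩) hpsd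
  choose g hg hqg using fun i => forms.mem_iff_exists_isHomogeneous.1 (q i).2
  refine ⟨n, g, hg, MvPolynomial.funext fun v => ?_⟩
  simpa [hqg] using congrFun hq v
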